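/- 𝔏(ℤ²) is a proper subset of 𝔏(H): every language recognized by a ℤ²-automaton is recognized by an H-automaton, and the language MULT = { xᵖ y^q z^{pq} : p, q ≥ 0 } over the alphabet {x, y, z} is recognized by an H-automaton but by no ℤ²-automaton. -/

import Mathlib

/-- A `G`-automaton over input alphabet `α`: a nondeterministic finite automaton
equipped with a register holding an element of the group `G`. -/
structure GAutomaton (α : Type*) (G : Type*) [Group G] where
  /-- the (finite) state set -/
  Q : Type
  finQ : Finite Q
  /-- the initial state -/
  q0 : Q
  /-- the accepting states -/
  acc : Set Q
  /-- the (finite) transition relation; `none` stands for ε -/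
  δ : Set (Q × Option α × Q × G)
  finδ : δ.Finite

namespace GAutomaton

variable {α : Type*} {G : Type*} [Group G]

/-- One computation step between configurations `(state, register, remaining input)`. -/
def Step (M : GAutomaton α G) (c c' : M.Q × G × List α) : Prop :=
  ∃ σ m, (c.1, σ, c'.1, m) ∈ M.δ ∧ c'.2.1 = c.2.1 * m ∧
    match σ with
    | none => c'.2.2 = c.2.2
    | some s => c.2.2 = s :: c'.2.2

/-- `M.StepsIn k c c'` : configuration `c'` is reachable from `c` in exactly `k` steps. -/
def StepsIn (M : GAutomaton α G) : ℕ → (M.Q × G × List α) → (M.Q × G × List α) → Prop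
  | 0, c, c' => c = c'
  | n + 1, c, c' => ∃ d, M.Step c d ∧ M.StepsIn n d c'

/-- `M` accepts the word `w` within `t` computation steps. -/
def AcceptsIn (M : GAutomaton α G) (w : List α) (t : ℕ) : Prop :=
  ∃ k ≤ t, ∃ q ∈ M.acc, M.StepsIn k (M.q0, 1, w) (q, 1, [])

/-- The language recognized by `M`. -/
def lang (M : GAutomaton α G) : Language α := {w | ∃ t, M.AcceptsIn w t}

/-- `M` is real-time if every transition consumes an input symbol. -/
def RealTime (M : GAutomaton α G) : Prop := ∀ tr ∈ M.δ, tr.2.1 ≠ none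

end GAutomaton

/-- `L ∈ 𝔏(G)` : the language `L` is recognized by some `G`-automaton. -/
def GRecognizable (G : Type*) [Group G] {α : Type*} (L : Language α) : Prop :=
  ∃ M : GAutomaton α G, M.lang = L

/-- `L ∈ 𝔏(G)ʷ_{t(n)}` : `L` is recognized by a weakly `t(n)` time-bounded `G`-automaton. -/
def GRecognizableInTime (G : Type*) [Group G] {α : Type*} (L : Language α) (t : ℕ → ℕ) : Prop :=
  ∃ M : GAutomaton α G, M.lang = L ∧ ∀ w ∈ L, M.AcceptsIn w (t w.length)

/-- `L ∈ 𝔏(G)ʷ_{O(n)}` : `L` is recognized by a weakly linear-time bounded `G`-automaton. -/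
def GRecognizableLinTime (G : Type*) [Group G] {α : Type*} (L : Language α) : Prop :=
  ∃ C : ℕ, GRecognizableInTime G L (fun n => C * n + C)

/-- The discrete Heisenberg group: the group of 3×3 upper unitriangular integer matrices,
as a subgroup of `SL(3,ℤ)`. -/
def Heisenberg : Subgroup (Matrix.SpecialLinearGroup (Fin 3) ℤ) where
  carrier := {M | M.1 0 0 = 1 ∧ M.1 1 1 = 1 ∧ M.1 2 2 = 1 ∧
    M.1 1 0 = 0 ∧ M.1 2 0 = 0 ∧ M.1 2 1 = 0}
  one_mem' := by
    simp [Matrix.SpecialLinearGroup.coe_one, Matrix.one_apply]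
  mul_mem' := by
    rintro A B ⟨hA1, hA2, hA3, hA4, hA5, hA6⟩ ⟨hB1, hB2, hB3, hB4, hB5, hB6⟩
    refine ⟨?_, ?_, ?_, ?_, ?_, ?_⟩ <;>
      simp [Matrix.SpecialLinearGroup.coe_mul, Matrix.mul_apply, Fin.sum_univ_three,
        hA1, hA2, hA3, hA4, hA5, hA6, hB1, hB2, hB3, hB4, hB5, hB6]
  inv_mem' := by
    rintro A ⟨hA1, hA2, hA3, hA4, hA5, hA6⟩
    have hinv : (A⁻¹).1 = (A.1).adjugate := Matrix.SpecialLinearGroup.coe_inv A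
    refine ⟨?_, ?_, ?_, ?_, ?_, ?_⟩ <;>
      simp [hinv, Matrix.adjugate_fin_three, Matrix.vecHead, Matrix.vecTail, hA1, hA2, hA3, hA4, hA5, hA6]

/-- The language `MULT = { xᵖ yᑫ z^{pq} : p, q ≥ 0 }` over the alphabet `{x, y, z}`
(encoded as `0, 1, 2 : Fin 3`). -/
def MULT : Language (Fin 3) :=
  {w | ∃ p q : ℕ,
    w = List.replicate p 0 ++ List.replicate q 1 ++ List.replicate (p * q) 2}

/-!
An injective homomorphism `ℤ² → H` turns every `ℤ²`-automaton into an `H`-automaton for the same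
language. Let `X`, `Y` be the standard generators of `H` and `Z` their commutator. Then
`XᵖYᑫZ⁻ʳX⁻ⁱY⁻ʲ = 1` if and only if `i = p`, `j = q` and `r = pq`, so an `H`-automaton recognizes
`MULT` by guessing `i` and `j`.

When the register group is abelian, the set of pairs of the Parikh vector of the input read and the
register value, over all runs between two given states, is semilinear, by induction on the number of
transitions. Hence so are Parikh images of recognizable languages. But on a linear subset of
`{v | v₂ = v₀v₁}` one of `v₀`, `v₁` is constant: otherwise two of its periods would contribute a
cross term to `v₀v₁`. So finitely many linear sets cannot cover the Parikh image of `MULT`.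
-/

open Pointwise

/-! ### Walks in a weighted graph -/

/-- `WeightedWalk E q w q'`: some walk from `q` to `q'` in the directed multigraph with edge set `E`
has total weight `w`; an edge is a triple of its source, its weight and its target. -/
inductive WeightedWalk {Q W : Type*} [AddMonoid W] (E : Set (Q × W × Q)) : Q → W → Q → Prop
  | nil (q : Q) : WeightedWalk E q 0 q
  | cons {q r q' : Q} {v w : W} :
      (q, v, r) ∈ E → WeightedWalk E r w q' → WeightedWalk E q (v + w) q'

namespace WeightedWalk

variable {Q W : Type*} [AddMonoid W] {E F : Set (Q × W × Q)} {q r q' : Q} {v w : W}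

theorem single (h : (q, w, q') ∈ E) : WeightedWalk E q w q' :=
  add_zero w ▸ cons h (nil q')

theorem trans (h : WeightedWalk E q v r) (h' : WeightedWalk E r w q') :
    WeightedWalk E q (v + w) q' := by
  induction h with
  | nil => rwa [zero_add]
  | cons he _ ih => rw [add_assoc]; exact cons he (ih h')

theorem mono (hEF : E ⊆ F) (h : WeightedWalk E q w q') : WeightedWalk F q w q' := by
  induction h with
  | nil q => exact nil q
  | cons he _ ih => exact cons (hEF he) ih

theorem of_mem_closure {s : Set W} (hs : ∀ w ∈ s, WeightedWalk E q w q)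
    (hw : w ∈ AddSubmonoid.closure s) : WeightedWalk E q w q := by
  induction hw using AddSubmonoid.closure_induction with
  | mem w hw => exact hs w hw
  | zero => exact nil q
  | add v w _ _ hv hw => exact hv.trans hw

end WeightedWalk

section MapWeights

variable {Q W W' : Type*} [AddMonoid W] [AddMonoid W'] {q q' : Q} {E : Set (Q × W × Q)}

/-- The edge set obtained from `E` by applying `f` to all weights. -/
def mapWeights (f : W → W') (E : Set (Q × W × Q)) : Set (Q × W' × Q) :=
  (fun e => (e.1, f e.2.1, e.2.2)) '' E

theorem weightedWalk_mapWeights (f : W →+ W') {w' : W'} :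
    WeightedWalk (mapWeights f E) q w' q' ↔ ∃ w, f w = w' ∧ WeightedWalk E q w q' := by
  constructor
  · intro h
    induction h with
    | nil q => exact ⟨0, map_zero f, .nil q⟩
    | cons he _ ih =>
      obtain ⟨⟨_, v, _⟩, he, h⟩ := he
      cases h
      obtain ⟨w, rfl, hw⟩ := ih
      exact ⟨v + w, map_add f v w, .cons he hw⟩
  · rintro ⟨w, rfl, h⟩
    induction h with
    | nil q => rw [map_zero]; exact .nil q
    | cons he _ ih => rw [map_add]; exact .cons ⟨_, he, rfl⟩ ih

end MapWeights

section WalkWeights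

variable {Q W : Type*}

/-- The set of all total weights of walks from `q` to `q'`. -/
def walkWeights [AddMonoid W] (E : Set (Q × W × Q)) (q q' : Q) : Set W :=
  {w | WeightedWalk E q w q'}

theorem walkWeights_empty_subset [AddMonoid W] (q q' : Q) :
    walkWeights (∅ : Set (Q × W × Q)) q q' ⊆ {0} := by
  rintro _ (_ | ⟨he, _⟩)
  · rfl
  · exact he.elim

-- Cut a walk at its traversals of the new edge.
theorem walkWeights_insert_subset [AddMonoid W] (E : Set (Q × W × Q)) (a b : Q) (m : W)
    (q q' : Q) :
    walkWeights (insert (a, m, b) E) q q' ⊆ walkWeights E q q' ∪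
      (walkWeights E q a + {m} + (AddSubmonoid.closure (walkWeights E b a + {m}) : Set W) +
        walkWeights E b q') := by
  intro w h
  induction h with
  | nil q => exact .inl (.nil q)
  | cons he _ ih =>
    rcases he with he | he
    · cases he
      right
      rcases ih with hw | ⟨_, ⟨_, ⟨x, hx, m, rfl, rfl⟩, c, hc, rfl⟩, y, hy, rfl⟩
      · exact ⟨_, ⟨_, ⟨0, .nil _, m, rfl, rfl⟩, 0, zero_mem _, rfl⟩, _, hw, by simp⟩
      · have hxm := AddSubmonoid.subset_closure (Set.add_mem_add hx (Set.mem_singleton m))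
        exact ⟨_, ⟨_, ⟨0, .nil _, m, rfl, rfl⟩, _, add_mem hxm hc, rfl⟩, y, hy,
          by simp [add_assoc]⟩
    · rcases ih with hw | ⟨_, ⟨_, ⟨x, hx, m, rfl, rfl⟩, c, hc, rfl⟩, y, hy, rfl⟩
      · exact .inl (.cons he hw)
      · exact .inr ⟨_, ⟨_, ⟨_, .cons he hx, m, rfl, rfl⟩, c, hc, rfl⟩, y, hy,
          by simp [add_assoc]⟩

theorem walkWeights_insert [AddMonoid W] (E : Set (Q × W × Q)) (a b : Q) (m : W) (q q' : Q) :
    walkWeights (insert (a, m, b) E) q q' = walkWeights E q q' ∪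
      (walkWeights E q a + {m} + (AddSubmonoid.closure (walkWeights E b a + {m}) : Set W) +
        walkWeights E b q') := by
  refine (walkWeights_insert_subset E a b m q q').antisymm ?_
  have hE : E ⊆ insert (a, m, b) E := Set.subset_insert _ _
  have hm : WeightedWalk (insert (a, m, b) E) a m b := .single (Set.mem_insert _ _)
  rintro _ (h | ⟨_, ⟨_, ⟨x, hx, m, rfl, rfl⟩, c, hc, rfl⟩, y, hy, rfl⟩)
  · exact h.mono hE
  · refine (((hx.mono hE).trans hm).trans (.of_mem_closure ?_ hc)).trans (hy.mono hE)
    rintro _ ⟨z, hz, m, rfl, rfl⟩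
    exact (hz.mono hE).trans hm

theorem isSemilinearSet_walkWeights [AddCommMonoid W] {E : Set (Q × W × Q)} (hE : E.Finite)
    (q q' : Q) : IsSemilinearSet (walkWeights E q q') := by
  induction E, hE using Set.Finite.induction_on generalizing q q' with
  | empty => exact .of_finite ((Set.finite_singleton 0).subset (walkWeights_empty_subset q q'))
  | @insert e E _ _ ih =>
    obtain ⟨a, m, b⟩ := e
    rw [walkWeights_insert]
    have hm := IsSemilinearSet.singleton m
    exact (ih q q').union ((((ih q a).add hm).add ((ih b a).add hm).closure).add (ih b q'))

end WalkWeights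

section Chain

variable {W : Type*} [AddMonoid W] {n : ℕ}

/-- The edges of a chain of vertices `0, …, n`: a loop of weight `x i` at each vertex `i < n` and an
edge of weight `0` from `i` to `i + 1`. -/
def chainEdges (x : Fin n → W) : Set (Fin (n + 1) × W × Fin (n + 1)) :=
  Set.range (fun i : Fin n => (i.castSucc, x i, i.castSucc)) ∪
    Set.range fun i : Fin n => (i.castSucc, 0, i.succ)

theorem walkWeights_chainEdges_last (x : Fin n → W) :
    walkWeights (chainEdges x) (Fin.last n) (Fin.last n) = 0 := by
  refine Set.Subset.antisymm ?_ (Set.singleton_subset_iff.2 (.nil _))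
  rintro _ (_ | ⟨he, -⟩)
  · rfl
  · rcases he with ⟨i, he⟩ | ⟨i, he⟩ <;>
      exact absurd (congrArg Prod.fst he) (Fin.castSucc_ne_last i)

theorem walkWeights_chainEdges_castSucc (x : Fin n → W) (i : Fin n) :
    walkWeights (chainEdges x) i.castSucc (Fin.last n) =
      AddSubmonoid.multiples (x i) + walkWeights (chainEdges x) i.succ (Fin.last n) := by
  refine Set.Subset.antisymm (fun w h => ?_) ?_
  · generalize hj : i.castSucc = j at h
    generalize hl : Fin.last n = l at h
    induction h with
    | nil => exact absurd (hj.trans hl.symm) (Fin.castSucc_ne_last i)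
    | @cons q r q' v w he h ih =>
      rcases he with ⟨j, he⟩ | ⟨j, he⟩ <;> cases he
      · obtain ⟨c, hc, w, hw, rfl⟩ := ih hj hl
        obtain rfl := Fin.castSucc_injective _ hj
        exact ⟨x i + c, add_mem (AddSubmonoid.mem_multiples _) hc, w, hw, add_assoc _ _ _⟩
      · exact ⟨0, zero_mem _, w, Fin.castSucc_injective _ hj ▸ hl ▸ h, rfl⟩
  · rintro _ ⟨_, hc, w, hw, rfl⟩
    have hskip : WeightedWalk (chainEdges x) i.castSucc 0 i.succ := .single (.inr ⟨i, rfl⟩)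
    rw [SetLike.mem_coe, AddSubmonoid.multiples_eq_closure] at hc
    refine .trans (.of_mem_closure ?_ hc) (zero_add w ▸ hskip.trans hw)
    rintro _ rfl
    exact .single (.inl ⟨i, rfl⟩)

theorem walkWeights_chainEdges (x : Fin n → W) (i : Fin (n + 1)) :
    walkWeights (chainEdges x) i (Fin.last n) =
      ((List.ofFn fun j => (AddSubmonoid.multiples (x j) : Set W)).drop i).sum := by
  induction i using Fin.reverseInduction with
  | last => rw [walkWeights_chainEdges_last, List.drop_of_length_le (by simp), List.sum_nil]
  | cast i ih =>
    rw [walkWeights_chainEdges_castSucc, ih, List.drop_eq_getElem_cons (i := i.castSucc) (by simp)]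
    simp

end Chain

/-! ### The walks of a `G`-automaton -/

namespace GAutomaton

variable {α G : Type*} [Group G]

/-- The effect of a transition that reads `t.1` and multiplies the register by `t.2`, as an element
of the monoid of pairs of a word and a register value. -/
def transitionWeight (t : Option α × G) : FreeAddMonoid α × Additive G :=
  (.ofList t.1.toList, .ofMul t.2)

/-- The transition graph of `M`, weighted by `transitionWeight`. -/
def edges (M : GAutomaton α G) : Set (M.Q × (FreeAddMonoid α × Additive G) × M.Q) :=
  (fun t => (t.1, transitionWeight (t.2.1, t.2.2.2), t.2.2.1)) '' M.δ

theorem step_iff (M : GAutomaton α G) {q q' : M.Q} {x y : G} {w u : List α} :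
    M.Step (q, x, w) (q', y, u) ↔
      ∃ σ m, (q, σ, q', m) ∈ M.δ ∧ y = x * m ∧ w = σ.toList ++ u := by
  refine exists_congr fun σ => exists_congr fun m => and_congr_right fun _ =>
    and_congr_right fun _ => ?_
  cases σ
  · exact eq_comm
  · exact Iff.rfl

theorem StepsIn.weightedWalk {M : GAutomaton α G} {k : ℕ} {q q' : M.Q} {x y : G} {w : List α}
    (h : M.StepsIn k (q, x, w) (q', y, [])) :
    WeightedWalk M.edges q (.ofList w, .ofMul (x⁻¹ * y)) q' := by
  induction k generalizing q x w with
  | zero =>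
    cases h
    rw [inv_mul_cancel]
    exact .nil _
  | succ k ih =>
    obtain ⟨⟨r, z, u⟩, hstep, h⟩ := h
    obtain ⟨σ, m, hδ, rfl, rfl⟩ := M.step_iff.1 hstep
    have hE : (q, transitionWeight (σ, m), r) ∈ M.edges := ⟨_, hδ, rfl⟩
    have hxy : x⁻¹ * y = m * ((x * m)⁻¹ * y) := by group
    rw [hxy]
    exact .cons hE (ih h)

theorem exists_stepsIn_of_weightedWalk {M : GAutomaton α G} {q q' : M.Q}
    {p : FreeAddMonoid α × Additive G} (h : WeightedWalk M.edges q p q') (x : G) :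
    ∃ k, M.StepsIn k (q, x, p.1.toList) (q', x * p.2.toMul, []) := by
  induction h generalizing x with
  | nil q => exact ⟨0, by rw [StepsIn]; simp⟩
  | cons he _ ih =>
    obtain ⟨⟨_, σ, _, m⟩, hδ, h⟩ := he
    cases h
    obtain ⟨k, hk⟩ := ih (x * m)
    rw [mul_assoc] at hk
    exact ⟨k + 1, _, M.step_iff.2 ⟨σ, m, hδ, rfl, rfl⟩, hk⟩

theorem mem_lang_iff (M : GAutomaton α G) {w : List α} :
    w ∈ M.lang ↔ ∃ q ∈ M.acc, WeightedWalk M.edges M.q0 (.ofList w, 0) q := by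
  constructor
  · rintro ⟨_, k, _, q, hq, h⟩
    exact ⟨q, hq, by simpa using h.weightedWalk⟩
  · rintro ⟨q, hq, h⟩
    obtain ⟨k, hk⟩ := exists_stepsIn_of_weightedWalk h 1
    exact ⟨k, k, le_rfl, q, hq, by simpa using hk⟩

/-- The automaton obtained from `M` by applying a homomorphism to all register operations. -/
def mapRegister {H : Type*} [Group H] (M : GAutomaton α G) (f : G →* H) : GAutomaton α H where
  Q := M.Q
  finQ := M.finQ
  q0 := M.q0
  acc := M.acc
  δ := (fun t => (t.1, t.2.1, t.2.2.1, f t.2.2.2)) '' M.δ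
  finδ := M.finδ.image _

theorem edges_mapRegister {H : Type*} [Group H] (M : GAutomaton α G) (f : G →* H) :
    (M.mapRegister f).edges =
      mapWeights ((AddMonoidHom.id (FreeAddMonoid α)).prodMap f.toAdditive) M.edges := by
  simp_rw [edges, mapWeights, mapRegister, Set.image_image]
  rfl

theorem lang_mapRegister {H : Type*} [Group H] (M : GAutomaton α G) {f : G →* H}
    (hf : Function.Injective f) : (M.mapRegister f).lang = M.lang := by
  ext w
  rw [mem_lang_iff, mem_lang_iff, edges_mapRegister]
  refine exists_congr fun q => and_congr_right fun _ => (weightedWalk_mapWeights _).trans ⟨?_, ?_⟩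
  · rintro ⟨⟨u, g⟩, h, hw⟩
    obtain ⟨rfl, hg⟩ := Prod.mk.inj h
    obtain rfl : g = 0 := hf (hg.trans (map_one f).symm)
    exact hw
  · exact fun h => ⟨(.ofList w, 0), Prod.ext rfl (map_one f), h⟩

/-- The automaton whose computations perform the operations `t 0, …, t (n - 1)` in this order, each
any number of times. -/
def chain {n : ℕ} (t : Fin n → Option α × G) : GAutomaton α G where
  Q := Fin (n + 1)
  finQ := inferInstance
  q0 := 0
  acc := {Fin.last n}
  δ := Set.range (fun i : Fin n => (i.castSucc, (t i).1, i.castSucc, (t i).2)) ∪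
    Set.range fun i : Fin n => (i.castSucc, none, i.succ, 1)
  finδ := (Set.finite_range _).union (Set.finite_range _)

theorem edges_chain {n : ℕ} (t : Fin n → Option α × G) :
    (chain t).edges = chainEdges fun i => transitionWeight (t i) :=
  (Set.image_union ..).trans (congrArg₂ _ (Set.range_comp ..).symm (Set.range_comp ..).symm)

theorem sum_nsmul_transitionWeight {n : ℕ} (t : Fin n → Option α × G) (e : Fin n → ℕ) :
    (List.ofFn fun i => e i • transitionWeight (t i)).sum =
      (.ofList (List.ofFn fun i => (List.replicate (e i) (t i).1.toList).flatten).flatten,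
        .ofMul (List.ofFn fun i => (t i).2 ^ e i).prod) := by
  refine Prod.ext
    ((map_list_sum (AddMonoidHom.fst (FreeAddMonoid α) (Additive G)) _).trans ?_)
    ((map_list_sum (AddMonoidHom.snd (FreeAddMonoid α) (Additive G)) _).trans ?_)
  · simp [transitionWeight, FreeAddMonoid.ofList_flatten, Function.comp_def]
  · simp [transitionWeight, ofMul_list_prod, Function.comp_def]

theorem mem_lang_chain {n : ℕ} (t : Fin n → Option α × G) {w : List α} :
    w ∈ (chain t).lang ↔ ∃ e : Fin n → ℕ,
      (List.ofFn fun i => (List.replicate (e i) (t i).1.toList).flatten).flatten = w ∧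
        (List.ofFn fun i => (t i).2 ^ e i).prod = 1 := by
  have hwalk : w ∈ (chain t).lang ↔ (FreeAddMonoid.ofList w, 0) ∈
      walkWeights (chainEdges fun i => transitionWeight (t i)) 0 (Fin.last n) := by
    rw [mem_lang_iff, edges_chain]
    exact exists_eq_left
  rw [hwalk, walkWeights_chainEdges, Fin.val_zero, List.drop_zero, Set.mem_sum_list_ofFn]
  constructor
  · rintro ⟨f, hf⟩
    choose e he using fun i => (f i).2
    simp only [← he, sum_nsmul_transitionWeight] at hf
    exact ⟨e, Prod.mk.inj hf⟩
  · rintro ⟨e, rfl, he⟩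
    exact ⟨fun i => ⟨_, e i, rfl⟩, (sum_nsmul_transitionWeight t e).trans (Prod.ext rfl he)⟩

end GAutomaton

theorem GRecognizable.of_injective {α G H : Type*} [Group G] [Group H] {L : Language α}
    {f : G →* H} (hf : Function.Injective f) (hL : GRecognizable G L) : GRecognizable H L := by
  obtain ⟨M, rfl⟩ := hL
  exact ⟨M.mapRegister f, M.lang_mapRegister hf⟩

/-! ### Parikh images -/

section Parikh

variable {α : Type*} [DecidableEq α]

/-- The Parikh vector of a word: the number of occurrences of each letter. -/
def parikh : FreeAddMonoid α →+ (α → ℕ) :=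
  AddMonoidHom.pi FreeAddMonoid.count

theorem parikh_ofList (w : List α) : parikh (.ofList w) = fun a => w.count a :=
  rfl

/-- The set of Parikh vectors of the words of a language. -/
def parikhImage (L : Language α) : Set (α → ℕ) :=
  {v | ∃ w ∈ L, parikh (.ofList w) = v}

theorem GAutomaton.parikhImage_lang {G : Type*} [Group G] (M : GAutomaton α G) :
    parikhImage M.lang = ⋃ q ∈ M.acc, AddMonoidHom.inl (α → ℕ) (Additive G) ⁻¹'
      walkWeights (mapWeights (parikh.prodMap (.id (Additive G))) M.edges) M.q0 q := by
  ext v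
  simp only [parikhImage, M.mem_lang_iff, walkWeights, weightedWalk_mapWeights, Set.mem_ofPred_eq,
    Set.mem_iUnion, Set.mem_preimage, exists_prop]
  constructor
  · rintro ⟨w, ⟨q, hq, hw⟩, rfl⟩
    exact ⟨q, hq, _, rfl, hw⟩
  · rintro ⟨q, hq, ⟨u, g⟩, h, hw⟩
    obtain ⟨rfl, rfl⟩ := Prod.mk.inj h
    exact ⟨u.toList, ⟨q, hq, hw⟩, rfl⟩

theorem GRecognizable.isSemilinearSet_parikhImage [Finite α] {G : Type*} [CommGroup G]
    {L : Language α} (hL : GRecognizable G L) : IsSemilinearSet (parikhImage L) := by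
  obtain ⟨M, rfl⟩ := hL
  have := M.finQ
  rw [M.parikhImage_lang]
  exact .biUnion (Set.toFinite _) fun q _ =>
    (isSemilinearSet_walkWeights ((M.finδ.image _).image _) _ _).preimage _

end Parikh

/-! ### Multiplication is not semilinear -/

section Multiplication

variable {N : Type*} [AddCommMonoid N] {f g h : N →+ ℕ}

theorem constant_or_constant_of_isLinearSet {s : Set N} (hs : IsLinearSet s)
    (hmul : ∀ v ∈ s, h v = f v * g v) : (∃ n, ∀ v ∈ s, f v = n) ∨ ∃ n, ∀ v ∈ s, g v = n := by
  obtain ⟨a, P, -, rfl⟩ := hs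
  have hmul_add : ∀ x ∈ AddSubmonoid.closure P, h a + h x = (f a + f x) * (g a + g x) := fun x hx =>
    by simpa using hmul (a +ᵥ x) (Set.vadd_mem_vadd_set hx)
  have hcross : ∀ x ∈ AddSubmonoid.closure P, ∀ y ∈ AddSubmonoid.closure P, f x * g y = 0 := by
    intro x hx y hy
    have h_zero := hmul_add 0 (zero_mem _)
    have h_add := hmul_add (x + y) (add_mem hx hy)
    simp only [map_zero, map_add, add_zero] at h_zero h_add
    nlinarith [hmul_add x hx, hmul_add y hy, Nat.zero_le (f y * g x)]
  by_cases hf : ∀ x ∈ AddSubmonoid.closure P, f x = 0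
  · refine .inl ⟨f a, ?_⟩
    rintro _ ⟨x, hx, rfl⟩
    simp [hf x hx]
  · push Not at hf
    obtain ⟨x, hx, hfx⟩ := hf
    refine .inr ⟨g a, ?_⟩
    rintro _ ⟨y, hy, rfl⟩
    simp [(Nat.mul_eq_zero.1 (hcross x hx y hy)).resolve_left hfx]

theorem exists_finite_of_isSemilinearSet {s : Set N} (hs : IsSemilinearSet s)
    (hmul : ∀ v ∈ s, h v = f v * g v) : ∃ F : Set ℕ, F.Finite ∧ ∀ v ∈ s, f v ∈ F ∨ g v ∈ F := by
  obtain ⟨S, hS, hlin, rfl⟩ := hs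
  have hconst : ∀ t ∈ S, ∃ n, ∀ v ∈ t, f v = n ∨ g v = n := by
    intro t ht
    rcases constant_or_constant_of_isLinearSet (hlin t ht) fun v hv => hmul v ⟨t, ht, hv⟩ with
      ⟨n, hn⟩ | ⟨n, hn⟩
    · exact ⟨n, fun v hv => .inl (hn v hv)⟩
    · exact ⟨n, fun v hv => .inr (hn v hv)⟩
  choose! c hc using hconst
  refine ⟨c '' S, hS.image c, ?_⟩
  rintro v ⟨t, ht, hv⟩
  have hct : c t ∈ c '' S := Set.mem_image_of_mem c ht
  exact (hc t ht v hv).imp (fun h => by rwa [h]) fun h => by rwa [h]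

theorem not_isSemilinearSet_mul {ι : Type*} {i j k : ι} (hik : i ≠ k) (hjk : j ≠ k) :
    ¬ IsSemilinearSet {v : ι → ℕ | v k = v i * v j} := by
  classical
  intro hs
  obtain ⟨F, hF, hfg⟩ := exists_finite_of_isSemilinearSet (f := Pi.evalAddMonoidHom (fun _ => ℕ) i)
    (g := Pi.evalAddMonoidHom _ j) (h := Pi.evalAddMonoidHom _ k) hs fun _ => id
  obtain ⟨m, hm⟩ := hF.exists_notMem
  have := hfg (Function.update (fun _ => m) k (m * m)) (by simp [hik, hjk])
  simp [hik, hjk, hm] at this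

end Multiplication

theorem parikhImage_MULT : parikhImage MULT = {v | v 2 = v 0 * v 1} := by
  have hparikh (p q r : ℕ) : parikh (.ofList (List.replicate p (0 : Fin 3) ++ List.replicate q 1 ++
      List.replicate r 2)) = ![p, q, r] := by
    ext a
    rw [parikh_ofList]
    fin_cases a <;> simp [List.count_replicate]
  ext v
  constructor
  · rintro ⟨_, ⟨p, q, rfl⟩, rfl⟩
    rw [hparikh]
    rfl
  · intro hv
    refine ⟨_, ⟨v 0, v 1, rfl⟩, ?_⟩
    rw [hparikh, ← hv]
    ext a
    fin_cases a <;> rfl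

theorem not_gRecognizable_MULT (G : Type*) [CommGroup G] : ¬ GRecognizable G MULT := fun h =>
  not_isSemilinearSet_mul (i := (0 : Fin 3)) (j := 1) (by decide) (by decide)
    (parikhImage_MULT ▸ h.isSemilinearSet_parikhImage)

/-! ### The Heisenberg group -/

/-- The Heisenberg matrix with superdiagonal entries `a`, `b` and corner entry `c`. -/
def heis (a b c : ℤ) : Heisenberg :=
  ⟨⟨!![1, a, c; 0, 1, b; 0, 0, 1], by simp [Matrix.det_fin_three]⟩, ⟨rfl, rfl, rfl, rfl, rfl, rfl⟩⟩

theorem heis_inj {a b c a' b' c' : ℤ} :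
    heis a b c = heis a' b' c' ↔ a = a' ∧ b = b' ∧ c = c' := by
  refine ⟨fun h => ?_, by rintro ⟨rfl, rfl, rfl⟩; rfl⟩
  have hentry (i j : Fin 3) := congrArg (fun A : Heisenberg => A.1.1 i j) h
  exact ⟨hentry 0 1, hentry 1 2, hentry 0 2⟩

theorem heis_zero : heis 0 0 0 = 1 :=
  Subtype.ext <| Subtype.ext Matrix.one_fin_three.symm

theorem heis_mul (a b c a' b' c' : ℤ) :
    heis a b c * heis a' b' c' = heis (a + a') (b + b') (c + c' + a * b') := by
  refine Subtype.ext <| Subtype.ext ?_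
  change !![1, a, c; 0, 1, b; 0, 0, 1] * !![1, a', c'; 0, 1, b'; 0, 0, 1] =
    !![1, a + a', c + c' + a * b'; 0, 1, b + b'; 0, 0, 1]
  rw [Matrix.mul_fin_three]
  ring_nf

theorem heis_pow {a b : ℤ} (c : ℤ) (hab : a * b = 0) (n : ℕ) :
    heis a b c ^ n = heis (n * a) (n * b) (n * c) := by
  induction n with
  | zero => simp [heis_zero]
  | succ n ih =>
    have hnab : n * a * b = 0 := by rw [mul_assoc, hab, mul_zero]
    rw [pow_succ, ih, heis_mul, hnab]
    push_cast
    ring_nf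

/-- The embedding of `ℤ²` as the group of Heisenberg matrices with vanishing `(1, 2)` entry. -/
def heisenbergEmbedding : Multiplicative (ℤ × ℤ) →* Heisenberg where
  toFun v := heis v.toAdd.1 0 v.toAdd.2
  map_one' := heis_zero
  map_mul' u v := by simp [heis_mul]

theorem heisenbergEmbedding_injective : Function.Injective heisenbergEmbedding := by
  intro u v h
  obtain ⟨h₁, -, h₂⟩ := heis_inj.1 h
  exact Multiplicative.toAdd.injective (Prod.ext h₁ h₂)

/-- The automaton computing `XᵖYᑫZ⁻ʳX⁻ⁱY⁻ʲ` on input `xᵖyᑫzʳ`, where `X`, `Y` are the standard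
generators of the Heisenberg group, `Z` is their commutator, and `i`, `j` are guessed. -/
def multAutomaton : GAutomaton (Fin 3) Heisenberg :=
  .chain ![(some 0, heis 1 0 0), (some 1, heis 0 1 0), (some 2, heis 0 0 (-1)),
    (none, heis (-1) 0 0), (none, heis 0 (-1) 0)]

theorem heis_pow_mul_eq_one_iff {p q r i j : ℕ} :
    heis 1 0 0 ^ p * (heis 0 1 0 ^ q * (heis 0 0 (-1) ^ r *
      (heis (-1) 0 0 ^ i * heis 0 (-1) 0 ^ j))) = 1 ↔ i = p ∧ j = q ∧ r = p * q := by
  simp only [heis_pow, heis_mul, ← heis_zero, heis_inj, mul_zero, zero_mul]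
  constructor
  · rintro ⟨ha, hb, hc⟩
    obtain rfl : i = p := by lia
    obtain rfl : j = q := by lia
    refine ⟨rfl, rfl, ?_⟩
    zify
    linarith
  · rintro ⟨rfl, rfl, rfl⟩
    push_cast
    refine ⟨by ring, by ring, by ring⟩

theorem lang_multAutomaton : multAutomaton.lang = MULT := by
  ext w
  rw [multAutomaton, GAutomaton.mem_lang_chain]
  constructor
  · rintro ⟨e, rfl, he⟩
    obtain ⟨-, -, hr⟩ : e 3 = e 0 ∧ e 4 = e 1 ∧ e 2 = e 0 * e 1 := by
      simpa [heis_pow_mul_eq_one_iff] using he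
    exact ⟨e 0, e 1, by simp [hr]⟩
  · rintro ⟨p, q, rfl⟩
    exact ⟨![p, q, p * q, p, q], by simp, by simp [heis_pow_mul_eq_one_iff]⟩

theorem Z2_lt_Heisenberg_general :
    (∀ {α : Type*} (L : Language α),
      GRecognizable (Multiplicative (ℤ × ℤ)) L → GRecognizable Heisenberg L) ∧
    GRecognizable Heisenberg MULT ∧
    ∀ (A : Type*) [CommGroup A], ¬ GRecognizable A MULT :=
  ⟨fun _ => .of_injective heisenbergEmbedding_injective, ⟨multAutomaton, lang_multAutomaton⟩,
    fun A _ => not_gRecognizable_MULT A⟩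

/-- `𝔏(ℤ²) ⊊ 𝔏(H)` where `H` is the discrete Heisenberg group.
(The additive group `ℤ²` is rendered multiplicatively as `Multiplicative (ℤ × ℤ)`.) -/
theorem Z2_lt_Heisenberg :
    (∀ (α : Type) [Fintype α] (L : Language α),
      GRecognizable (Multiplicative (ℤ × ℤ)) L → GRecognizable Heisenberg L) ∧
    GRecognizable Heisenberg MULT ∧
    ¬ GRecognizable (Multiplicative (ℤ × ℤ)) MULT :=
  have ⟨hsub, hmem, hnot⟩ := Z2_lt_Heisenberg_general
  ⟨fun _ _ => hsub, hmem, hnot _⟩
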